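/- Let λ > 0 be real, m ≥ 1 an integer, and Φ_m(t) = Σ_{l=0}^{m} ((l+λ)/λ) C_l^λ(t). Then the momentum variance of Φ_m, defined as var_M(Φ_m) = −∫_{−1}^{1} ((1−t²) Φ_m''(t) − (2λ+1) t Φ_m'(t)) Φ_m(t) (1−t²)^{λ−1/2} dt / ∫_{−1}^{1} Φ_m(t)² (1−t²)^{λ−1/2} dt, satisfies var_M(Φ_m) = m·(m+2λ+1)·(2λ+1)/(2λ+3). -/

import Mathlib

open Real Finset

/-- The Gegenbauer polynomials `C_l^λ`, defined by `C_0^λ(t) = 1`, `C_1^λ(t) = 2λt` and the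
recurrence `(l+1) C_{l+1}^λ(t) = 2(l+λ) t C_l^λ(t) − (l+2λ−1) C_{l−1}^λ(t)` for `l ≥ 1`. -/
noncomputable def gegenbauer (lam : ℝ) : ℕ → ℝ → ℝ
  | 0 => fun _ => 1
  | 1 => fun t => 2 * lam * t
  | (l + 2) => fun t =>
      (2 * ((l : ℝ) + 1 + lam) * t * gegenbauer lam (l + 1) t
        - ((l : ℝ) + 2 * lam) * gegenbauer lam l t) / ((l : ℝ) + 2)

/-- `Φ_m = Σ_{l=0}^m ((l+λ)/λ) C_l^λ`, the (unnormalized) weighted scaling function. -/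
noncomputable def PhiScaling (lam : ℝ) (m : ℕ) : ℝ → ℝ :=
  fun t => ∑ l ∈ Finset.range (m + 1), (((l : ℝ) + lam) / lam) * gegenbauer lam l t

/-!
The Gegenbauer polynomials are eigenvectors of `L f = (1 - t²) f'' - (2λ + 1) t f'`, with
eigenvalues `-l (l + 2λ)`, and `L` is symmetric for the weight `(1 - t²) ^ (λ - 1/2)`. Hence they
are orthogonal, and the variance is the quotient of `∑ l (l + 2λ) (l + λ)² h_l` by
`∑ (l + λ)² h_l`, where `h_l` is the squared norm of `C_l^λ`. The norms satisfy
`(l + 1) (l + 1 + λ) h_{l+1} = (l + λ) (l + 2λ) h_l`, which makes both sums telescope.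
-/

open MeasureTheory Polynomial

section Laplacian

variable {R : Type*} [CommRing R] (lam : R)

/-- The Laplace–Beltrami operator `f ↦ (1 - t²) f'' - (2λ + 1) t f'` on zonal functions, acting on
polynomials in `t = cos θ`. -/
noncomputable def zonalLaplacian : R[X] →ₗ[R] R[X] :=
  LinearMap.mulLeft R (1 - X ^ 2) ∘ₗ derivative ∘ₗ derivative
    - LinearMap.mulLeft R (C (2 * lam + 1) * X) ∘ₗ derivative

lemma zonalLaplacian_apply (p : R[X]) :
    zonalLaplacian lam p =
      (1 - X ^ 2) * derivative (derivative p) - C (2 * lam + 1) * X * derivative p := rfl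

end Laplacian

section Polynomials

variable {K : Type*} [Field K] (lam : K)

/-- The Gegenbauer polynomial `C_l^λ` as an element of `K[X]`; see `eval_gegenbauerPoly` for the
comparison with the real function `gegenbauer`. -/
noncomputable def gegenbauerPoly : ℕ → K[X]
  | 0 => 1
  | 1 => C (2 * lam) * X
  | (l + 2) => C ((l + 2 : K)⁻¹) * (C (2 * (l + 1 + lam)) * X * gegenbauerPoly (l + 1)
      - C (l + 2 * lam) * gegenbauerPoly l)

/-- The unnormalized scaling function `Φ_m` as an element of `K[X]`. -/
noncomputable def scalingPoly (m : ℕ) : K[X] :=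
  ∑ l ∈ range (m + 1), ((l + lam) / lam) • gegenbauerPoly lam l

variable [CharZero K]

lemma gegenbauerPoly_recurrence (l : ℕ) :
    C (l + 2 : K) * gegenbauerPoly lam (l + 2) =
      C (2 * (l + 1 + lam)) * X * gegenbauerPoly lam (l + 1)
        - C (l + 2 * lam) * gegenbauerPoly lam l := by
  have h : (l + 2 : K) ≠ 0 := mod_cast (l + 1).succ_ne_zero
  rw [gegenbauerPoly, ← mul_assoc, ← C_mul, mul_inv_cancel₀ h, C_1, one_mul]

lemma derivative_gegenbauerPoly_relations (l : ℕ) :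
    derivative (gegenbauerPoly lam (l + 1)) =
        X * derivative (gegenbauerPoly lam l) + C (l + 2 * lam) * gegenbauerPoly lam l ∧
      X * derivative (gegenbauerPoly lam (l + 1)) - derivative (gegenbauerPoly lam l) =
        C (l + 1 : K) * gegenbauerPoly lam (l + 1) := by
  induction l with
  | zero => simp [gegenbauerPoly, mul_comm]
  | succ l ih =>
    obtain ⟨hsucc, hpred⟩ := ih
    have hrec := gegenbauerPoly_recurrence lam l
    have hderiv := congrArg derivative hrec
    have hne : C (l + 2 : K) ≠ 0 := C_ne_zero.2 (mod_cast (l + 1).succ_ne_zero)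
    simp only [derivative_mul, derivative_sub, derivative_C, derivative_X, zero_mul, zero_add,
      mul_one] at hderiv
    simp only [C_add, C_mul, C_1, C_ofNat, Nat.cast_add, Nat.cast_one] at *
    have hsucc' : derivative (gegenbauerPoly lam (l + 2)) =
        X * derivative (gegenbauerPoly lam (l + 1))
          + (C (l : K) + 1 + 2 * C lam) * gegenbauerPoly lam (l + 1) := by
      apply mul_left_cancel₀ hne
      linear_combination hderiv + (C (l : K) + 2 * C lam) * hpred
    exact ⟨hsucc', by linear_combination X * hsucc' + X * hpred - hsucc - hrec⟩

lemma one_sub_X_sq_mul_derivative_gegenbauerPoly (l : ℕ) :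
    (1 - X ^ 2) * derivative (gegenbauerPoly lam l) =
      C (l + 2 * lam) * X * gegenbauerPoly lam l
        - C (l + 1 : K) * gegenbauerPoly lam (l + 1) := by
  obtain ⟨hsucc, hpred⟩ := derivative_gegenbauerPoly_relations lam l
  linear_combination X * hsucc - hpred

lemma one_sub_X_sq_mul_derivative_gegenbauerPoly_succ (l : ℕ) :
    (1 - X ^ 2) * derivative (gegenbauerPoly lam (l + 1)) =
      C (l + 2 * lam) * gegenbauerPoly lam l
        - C (l + 1 : K) * X * gegenbauerPoly lam (l + 1) := by
  obtain ⟨hsucc, hpred⟩ := derivative_gegenbauerPoly_relations lam l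
  linear_combination hsucc - X * hpred

theorem zonalLaplacian_gegenbauerPoly (l : ℕ) :
    zonalLaplacian lam (gegenbauerPoly lam l) =
      (-(l * (l + 2 * lam))) • gegenbauerPoly lam l := by
  have hsucc := (derivative_gegenbauerPoly_relations lam l).1
  have hderiv := congrArg derivative (one_sub_X_sq_mul_derivative_gegenbauerPoly lam l)
  simp only [derivative_mul, derivative_sub, derivative_C, derivative_X, derivative_one,
    derivative_X_pow, zero_mul, zero_add, mul_one] at hderiv
  simp only [zonalLaplacian_apply, smul_eq_C_mul, C_neg, C_add, C_mul, C_1, C_ofNat,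
    Nat.cast_ofNat] at *
  linear_combination hderiv - (C (l : K) + 1) * hsucc

lemma zonalLaplacian_scalingPoly (m : ℕ) :
    zonalLaplacian lam (scalingPoly lam m) =
      ∑ l ∈ range (m + 1),
        (-(l * (l + 2 * lam)) * ((l + lam) / lam)) • gegenbauerPoly lam l := by
  simp only [scalingPoly, map_sum, map_smul, zonalLaplacian_gegenbauerPoly, smul_smul, mul_comm]

end Polynomials

lemma eval_gegenbauerPoly (lam t : ℝ) (l : ℕ) :
    (gegenbauerPoly lam l).eval t = gegenbauer lam l t := by
  induction l using Nat.twoStepInduction with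
  | zero => simp [gegenbauerPoly, gegenbauer]
  | one => simp [gegenbauerPoly, gegenbauer]
  | more l ih ih' => simp [gegenbauerPoly, gegenbauer, ih, ih', div_eq_inv_mul]

lemma PhiScaling_eq_eval_scalingPoly (lam : ℝ) (m : ℕ) :
    PhiScaling lam m = fun t => (scalingPoly lam m).eval t := by
  funext t
  simp [PhiScaling, scalingPoly, eval_finsetSum, eval_gegenbauerPoly]

section Telescoping

variable {R : Type*} [CommRing R] {a : R} {h : ℕ → R}

lemma sum_sq_mul_of_recurrence
    (hrec : ∀ l : ℕ, (l + 1) * (l + 1 + a) * h (l + 1) = (l + a) * (l + 2 * a) * h l) (m : ℕ) :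
    2 * (2 * a + 1) * ∑ l ∈ range (m + 1), (l + a) ^ 2 * h l =
      (m + a) * (m + 2 * a) * (2 * m + 2 * a + 1) * h m := by
  induction m with
  | zero =>
    simp only [zero_add, sum_range_one, Nat.cast_zero]
    ring
  | succ m ih =>
    rw [sum_range_succ]
    push_cast
    linear_combination ih - (2 * m + 2 * a + 1) * hrec m

lemma sum_eigenvalue_mul_sq_mul_of_recurrence
    (hrec : ∀ l : ℕ, (l + 1) * (l + 1 + a) * h (l + 1) = (l + a) * (l + 2 * a) * h l) (m : ℕ) :
    2 * (2 * a + 3) * ∑ l ∈ range (m + 1), l * (l + 2 * a) * ((l + a) ^ 2 * h l) =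
      m * (m + 2 * a + 1) * ((m + a) * (m + 2 * a) * (2 * m + 2 * a + 1) * h m) := by
  induction m with
  | zero => simp
  | succ m ih =>
    rw [sum_range_succ]
    push_cast
    linear_combination ih - m * (m + 2 * a + 1) * (2 * m + 2 * a + 1) * hrec m

end Telescoping

lemma one_sub_sq_pos_of_mem_Ioo {t : ℝ} (ht : t ∈ Set.Ioo (-1) 1) : 0 < 1 - t ^ 2 := by
  nlinarith [ht.1, ht.2]

lemma intervalIntegrable_one_sub_sq_rpow {s : ℝ} (hs : -1 < s) :
    IntervalIntegrable (fun t : ℝ => (1 - t ^ 2) ^ s) volume (-1) 1 := by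
  have hright : IntervalIntegrable (fun t : ℝ => (1 - t ^ 2) ^ s) volume 0 1 := by
    have hsing : IntervalIntegrable (fun t : ℝ => (1 - t) ^ s) volume 0 1 := by
      simpa using (intervalIntegral.intervalIntegrable_rpow' (a := 1) (b := 0) hs).comp_sub_left 1
    have hcont : ContinuousOn (fun t : ℝ => (1 + t) ^ s) (Set.uIcc 0 1) := by
      rw [Set.uIcc_of_le zero_le_one]
      exact ContinuousOn.rpow_const (by fun_prop) fun t ht => Or.inl (by linarith [ht.1])
    refine (hsing.mul_continuousOn hcont).congr fun t ht => ?_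
    rw [Set.uIoc_of_le zero_le_one] at ht
    rw [← mul_rpow (by linarith [ht.2]) (by linarith [ht.1])]
    ring_nf
  have hleft : IntervalIntegrable (fun t : ℝ => (1 - t ^ 2) ^ s) volume 0 (-1) := by
    simpa using hright.comp_sub_left 0
  exact hleft.symm.trans hright

section WeightedIntegral

variable {lam : ℝ}

lemma intervalIntegrable_eval_mul_weight (hlam : -1 / 2 < lam) (p : ℝ[X]) :
    IntervalIntegrable (fun t : ℝ => p.eval t * (1 - t ^ 2) ^ (lam - 1 / 2)) volume (-1) 1 :=
  (intervalIntegrable_one_sub_sq_rpow (by linarith)).continuousOn_mul p.continuous.continuousOn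

/-- Integration over `[-1, 1]` against the Gegenbauer weight `(1 - t²) ^ (λ - 1/2)`, as a linear
functional on polynomials. The bound on `λ` makes the weight integrable, which linearity requires
because the integral of a non-integrable function is `0` by convention. -/
noncomputable def gegenbauerIntegral (hlam : -1 / 2 < lam) : ℝ[X] →ₗ[ℝ] ℝ where
  toFun p := ∫ t in (-1 : ℝ)..1, p.eval t * (1 - t ^ 2) ^ (lam - 1 / 2)
  map_add' p q := by
    rw [← intervalIntegral.integral_add (intervalIntegrable_eval_mul_weight hlam p)
      (intervalIntegrable_eval_mul_weight hlam q)]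
    simp only [eval_add, add_mul]
  map_smul' c p := by
    simp [mul_assoc]

variable (hlam : -1 / 2 < lam)

lemma gegenbauerIntegral_apply (p : ℝ[X]) :
    gegenbauerIntegral hlam p = ∫ t in (-1 : ℝ)..1, p.eval t * (1 - t ^ 2) ^ (lam - 1 / 2) := rfl

lemma gegenbauerIntegral_C_mul (c : ℝ) (p : ℝ[X]) :
    gegenbauerIntegral hlam (C c * p) = c * gegenbauerIntegral hlam p := by
  rw [← smul_eq_C_mul, map_smul, smul_eq_mul]

lemma gegenbauerIntegral_sq_nonneg (p : ℝ[X]) : 0 ≤ gegenbauerIntegral hlam (p ^ 2) := by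
  refine intervalIntegral.integral_nonneg (by norm_num) fun t ht => ?_
  have hweight : 0 ≤ 1 - t ^ 2 := by nlinarith [ht.1, ht.2]
  rw [eval_pow]
  positivity

lemma gegenbauerIntegral_one_pos : 0 < gegenbauerIntegral hlam 1 := by
  refine intervalIntegral.intervalIntegral_pos_of_pos_on
    (intervalIntegrable_eval_mul_weight hlam 1) (fun t ht => ?_) (by norm_num)
  simpa using rpow_pos_of_pos (one_sub_sq_pos_of_mem_Ioo ht) _

lemma gegenbauerIntegral_zonalLaplacian_mul (p q : ℝ[X]) :
    gegenbauerIntegral hlam (zonalLaplacian lam p * q) =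
      ∫ t in (-1 : ℝ)..1,
        ((1 - t ^ 2) * deriv (deriv fun x => p.eval x) t
            - (2 * lam + 1) * t * deriv (fun x => p.eval x) t) *
          q.eval t * (1 - t ^ 2) ^ (lam - 1 / 2) := by
  have hderiv (r : ℝ[X]) : (deriv fun x => r.eval x) = fun x => (derivative r).eval x :=
    funext fun x => r.deriv
  simp [gegenbauerIntegral_apply, zonalLaplacian_apply, hderiv]

lemma hasDerivAt_eval_mul_weight (lam : ℝ) (p : ℝ[X]) {t : ℝ} (ht : t ∈ Set.Ioo (-1) 1) :
    HasDerivAt (fun t : ℝ => p.eval t * (1 - t ^ 2) ^ (lam + 1 / 2))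
      (((1 - X ^ 2) * derivative p - C (2 * lam + 1) * (X * p)).eval t *
        (1 - t ^ 2) ^ (lam - 1 / 2)) t := by
  have hpos := one_sub_sq_pos_of_mem_Ioo ht
  have hbase : HasDerivAt (fun t : ℝ => 1 - t ^ 2) (-(2 * t)) t := by
    simpa using ((hasDerivAt_id t).pow 2).const_sub 1
  refine ((p.hasDerivAt t).mul (hbase.rpow_const (Or.inl hpos.ne'))).congr_deriv ?_
  have hexp : lam + 1 / 2 - 1 = lam - 1 / 2 := by ring
  have hsplit : (1 - t ^ 2) ^ (lam + 1 / 2) = (1 - t ^ 2) ^ (lam - 1 / 2) * (1 - t ^ 2) := by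
    rw [← rpow_add_one hpos.ne']
    ring_nf
  simp only [hexp, hsplit, eval_sub, eval_mul, eval_one, eval_pow, eval_X, eval_C]
  ring

theorem gegenbauerIntegral_one_sub_X_sq_mul_derivative (p : ℝ[X]) :
    gegenbauerIntegral hlam ((1 - X ^ 2) * derivative p) =
      (2 * lam + 1) * gegenbauerIntegral hlam (X * p) := by
  have hexp : 0 < lam + 1 / 2 := by linarith
  have hcont : Continuous fun t : ℝ => p.eval t * (1 - t ^ 2) ^ (lam + 1 / 2) :=
    p.continuous.mul (Continuous.rpow_const (by fun_prop) fun _ => Or.inr hexp.le)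
  have hdiv : gegenbauerIntegral hlam ((1 - X ^ 2) * derivative p - C (2 * lam + 1) * (X * p))
      = 0 := by
    rw [gegenbauerIntegral_apply, intervalIntegral.integral_eq_sub_of_hasDerivAt_of_le
      (by norm_num) hcont.continuousOn (fun t ht => hasDerivAt_eval_mul_weight lam p ht)
      (intervalIntegrable_eval_mul_weight hlam _)]
    simp only [one_pow, even_two.neg_pow, sub_self, zero_rpow hexp.ne', mul_zero]
  rwa [map_sub, gegenbauerIntegral_C_mul, sub_eq_zero] at hdiv

lemma gegenbauerIntegral_zonalLaplacian_mul_eq_neg (p q : ℝ[X]) :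
    gegenbauerIntegral hlam (zonalLaplacian lam p * q) =
      -gegenbauerIntegral hlam ((1 - X ^ 2) * (derivative p * derivative q)) := by
  have hparts := gegenbauerIntegral_one_sub_X_sq_mul_derivative hlam (derivative p * q)
  have hsplit : zonalLaplacian lam p * q = (1 - X ^ 2) * derivative (derivative p * q)
      - C (2 * lam + 1) * (X * (derivative p * q))
      - (1 - X ^ 2) * (derivative p * derivative q) := by
    rw [zonalLaplacian_apply, derivative_mul]
    ring
  rw [hsplit, map_sub, map_sub, gegenbauerIntegral_C_mul, hparts, sub_self, zero_sub]

theorem gegenbauerIntegral_zonalLaplacian_mul_comm (p q : ℝ[X]) :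
    gegenbauerIntegral hlam (zonalLaplacian lam p * q) =
      gegenbauerIntegral hlam (p * zonalLaplacian lam q) := by
  rw [mul_comm p, gegenbauerIntegral_zonalLaplacian_mul_eq_neg,
    gegenbauerIntegral_zonalLaplacian_mul_eq_neg, mul_comm (derivative p)]

theorem gegenbauerIntegral_gegenbauerPoly_mul_of_ne {k l : ℕ} (hkl : k ≠ l) :
    gegenbauerIntegral hlam (gegenbauerPoly lam k * gegenbauerPoly lam l) = 0 := by
  have hsymm := gegenbauerIntegral_zonalLaplacian_mul_comm hlam
    (gegenbauerPoly lam k) (gegenbauerPoly lam l)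
  simp only [zonalLaplacian_gegenbauerPoly, smul_mul_assoc, mul_smul_comm, map_smul,
    smul_eq_mul] at hsymm
  have hdiff : (l - k : ℝ) ≠ 0 := sub_ne_zero.2 (mod_cast hkl.symm)
  have hsum : (l + k + 2 * lam : ℝ) ≠ 0 := by
    have hone : (1 : ℝ) ≤ l + k := by exact_mod_cast (by omega : 1 ≤ l + k)
    linarith
  refine (mul_eq_zero.1 ?_).resolve_left (mul_ne_zero hdiff hsum)
  linear_combination hsymm

lemma gegenbauerIntegral_sum_mul_sum (s : Finset ℕ) (a b : ℕ → ℝ) :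
    gegenbauerIntegral hlam
        ((∑ l ∈ s, a l • gegenbauerPoly lam l) * ∑ l ∈ s, b l • gegenbauerPoly lam l) =
      ∑ l ∈ s, a l * b l * gegenbauerIntegral hlam (gegenbauerPoly lam l ^ 2) := by
  rw [sum_mul_sum, map_sum]
  refine sum_congr rfl fun k hk => ?_
  rw [map_sum, sum_eq_single_of_mem k hk]
  · rw [smul_mul_smul_comm, map_smul, smul_eq_mul, sq]
  · intro l _ hlk
    rw [smul_mul_smul_comm, map_smul, gegenbauerIntegral_gegenbauerPoly_mul_of_ne hlam hlk.symm,
      smul_zero]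

theorem gegenbauerIntegral_gegenbauerPoly_sq_succ (l : ℕ) :
    (l + 1) * (l + 1 + lam) * gegenbauerIntegral hlam (gegenbauerPoly lam (l + 1) ^ 2) =
      (l + lam) * (l + 2 * lam) * gegenbauerIntegral hlam (gegenbauerPoly lam l ^ 2) := by
  set I := gegenbauerIntegral hlam
  set P := gegenbauerPoly lam
  have hparts : (l + 2 * lam) * I (P l ^ 2) - (l + 1) * I (P (l + 1) ^ 2) =
      2 * I (X * (P l * P (l + 1))) := by
    have hprod : (1 - X ^ 2) * derivative (P l * P (l + 1)) =
        C (l + 2 * lam) * P l ^ 2 - C (l + 1 : ℝ) * P (l + 1) ^ 2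
          + C (2 * lam - 1) * (X * (P l * P (l + 1))) := by
      have hl := one_sub_X_sq_mul_derivative_gegenbauerPoly lam l
      have hl' := one_sub_X_sq_mul_derivative_gegenbauerPoly_succ lam l
      simp only [derivative_mul, C_add, C_sub, C_mul, C_1, C_ofNat] at *
      linear_combination P (l + 1) * hl + P l * hl'
    have hint := gegenbauerIntegral_one_sub_X_sq_mul_derivative hlam (P l * P (l + 1))
    simp only [hprod, LinearMap.map_add, LinearMap.map_sub, gegenbauerIntegral_C_mul] at hint
    simp only [I]
    linear_combination hint
  have hrec : 2 * (l + 1 + lam) * I (X * (P l * P (l + 1))) = (l + 2 * lam) * I (P l ^ 2) := by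
    have hprod : C (2 * (l + 1 + lam)) * (X * (P l * P (l + 1))) =
        C (l + 2 : ℝ) * (P l * P (l + 2)) + C (l + 2 * lam) * P l ^ 2 := by
      linear_combination -P l * gegenbauerPoly_recurrence lam l
    have horth : I (P l * P (l + 2)) = 0 :=
      gegenbauerIntegral_gegenbauerPoly_mul_of_ne hlam (by omega)
    simpa only [LinearMap.map_add, gegenbauerIntegral_C_mul, horth, mul_zero, zero_add, I]
      using congrArg I hprod
  linear_combination -(l + 1 + lam) * hparts - hrec

lemma gegenbauerIntegral_scalingPoly_sq (m : ℕ) :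
    gegenbauerIntegral hlam (scalingPoly lam m ^ 2) =
      ∑ l ∈ range (m + 1),
        ((l + lam) / lam) ^ 2 * gegenbauerIntegral hlam (gegenbauerPoly lam l ^ 2) := by
  rw [sq, scalingPoly, gegenbauerIntegral_sum_mul_sum]
  simp only [sq]

lemma gegenbauerIntegral_scalingPoly_sq_pos (hlam₀ : lam ≠ 0) (m : ℕ) :
    0 < gegenbauerIntegral hlam (scalingPoly lam m ^ 2) := by
  rw [gegenbauerIntegral_scalingPoly_sq]
  refine sum_pos'
    (fun l _ => mul_nonneg (sq_nonneg _) (gegenbauerIntegral_sq_nonneg hlam _)) ⟨0, by simp, ?_⟩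
  simpa [gegenbauerPoly, hlam₀] using gegenbauerIntegral_one_pos hlam

theorem gegenbauerIntegral_zonalLaplacian_scalingPoly_mul (m : ℕ) :
    gegenbauerIntegral hlam (zonalLaplacian lam (scalingPoly lam m) * scalingPoly lam m) =
      -(m * (m + 2 * lam + 1) * (2 * lam + 1) / (2 * lam + 3)) *
        gegenbauerIntegral hlam (scalingPoly lam m ^ 2) := by
  set h : ℕ → ℝ := fun l => gegenbauerIntegral hlam (gegenbauerPoly lam l ^ 2) / lam ^ 2 with hh
  have hrec (l : ℕ) : (l + 1) * (l + 1 + lam) * h (l + 1) = (l + lam) * (l + 2 * lam) * h l := by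
    simp only [hh]
    linear_combination gegenbauerIntegral_gegenbauerPoly_sq_succ hlam l / lam ^ 2
  have hnorm : gegenbauerIntegral hlam (scalingPoly lam m ^ 2) =
      ∑ l ∈ range (m + 1), (l + lam) ^ 2 * h l := by
    rw [gegenbauerIntegral_scalingPoly_sq]
    exact sum_congr rfl fun l _ => by ring
  have henergy :
      gegenbauerIntegral hlam (zonalLaplacian lam (scalingPoly lam m) * scalingPoly lam m) =
        -∑ l ∈ range (m + 1), l * (l + 2 * lam) * ((l + lam) ^ 2 * h l) := by
    rw [zonalLaplacian_scalingPoly, scalingPoly, gegenbauerIntegral_sum_mul_sum, ← sum_neg_distrib]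
    exact sum_congr rfl fun l _ => by ring
  have hne : 2 * lam + 3 ≠ 0 := by linarith
  rw [hnorm, henergy, neg_mul, div_mul_eq_mul_div, neg_inj, eq_div_iff hne]
  linear_combination sum_eigenvalue_mul_sq_mul_of_recurrence hrec m / 2
    - m * (m + 2 * lam + 1) / 2 * sum_sq_mul_of_recurrence hrec m

end WeightedIntegral

theorem momentum_variance_PhiScaling_general (lam : ℝ) (hlam : -1 / 2 < lam) (hlam₀ : lam ≠ 0)
    (m : ℕ) :
    (-∫ t in (-1 : ℝ)..1,
          ((1 - t ^ 2) * deriv (deriv (PhiScaling lam m)) t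
              - (2 * lam + 1) * t * deriv (PhiScaling lam m) t) *
            PhiScaling lam m t * (1 - t ^ 2) ^ (lam - 1 / 2)) /
        (∫ t in (-1 : ℝ)..1, (PhiScaling lam m t) ^ 2 * (1 - t ^ 2) ^ (lam - 1 / 2)) =
      (m : ℝ) * ((m : ℝ) + 2 * lam + 1) * (2 * lam + 1) / (2 * lam + 3) := by
  have hnorm : (∫ t in (-1 : ℝ)..1,
      (scalingPoly lam m).eval t ^ 2 * (1 - t ^ 2) ^ (lam - 1 / 2)) =
        gegenbauerIntegral hlam (scalingPoly lam m ^ 2) := by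
    simp only [gegenbauerIntegral_apply, eval_pow]
  rw [PhiScaling_eq_eval_scalingPoly, ← gegenbauerIntegral_zonalLaplacian_mul hlam, hnorm,
    gegenbauerIntegral_zonalLaplacian_scalingPoly_mul, neg_mul, neg_neg,
    mul_div_cancel_right₀ _ (gegenbauerIntegral_scalingPoly_sq_pos hlam hlam₀ m).ne']

/-- The momentum variance of the weighted scaling function `Φ_m` equals
`m(m+2λ+1)(2λ+1)/(2λ+3)`; here `f ↦ (1−t²)f'' − (2λ+1)t f'` is the Laplace–Beltrami
operator of the sphere acting on zonal functions. -/
theorem momentum_variance_PhiScaling (lam : ℝ) (hlam : 0 < lam) (m : ℕ) (hm : 1 ≤ m) :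
    (-∫ t in (-1 : ℝ)..1,
          ((1 - t ^ 2) * deriv (deriv (PhiScaling lam m)) t
              - (2 * lam + 1) * t * deriv (PhiScaling lam m) t) *
            PhiScaling lam m t * (1 - t ^ 2) ^ (lam - 1 / 2)) /
        (∫ t in (-1 : ℝ)..1, (PhiScaling lam m t) ^ 2 * (1 - t ^ 2) ^ (lam - 1 / 2)) =
      (m : ℝ) * ((m : ℝ) + 2 * lam + 1) * (2 * lam + 1) / (2 * lam + 3) := by
  exact momentum_variance_PhiScaling_general lam (by linarith) hlam.ne' m
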